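/- arXiv:2602.24015 — 11 statements merged into one kernel-verified Lean document; each statement's English description precedes it below -/
import Mathlib

section
/- Let q ≥ 5 be an odd integer and set m = (q+1)/2. Then the set of integers { i + 2j + k(q+1) + 1 : i, j, k nonnegative integers with i + j + 2k ≤ m − 3 } has exactly (q−1)(q−3)/8 elements. -/
/-!
Write `q + 1 = 2m` and `N = m - 3`. For fixed `k`, the numbers `i + 2j` with `i + j ≤ N - 2k` are
exactly `0, …, 2(N - 2k)`, so the set is the union over `k ≤ N / 2` of the integer intervals of
length `2(N - 2k) + 1` starting at `2mk + 1`. These lengths are less than `2m`, so the intervals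
are pairwise disjoint, and the cardinality is
`∑ k ≤ N / 2, (2(N - 2k) + 1) = (N + 1)(N + 2) / 2` (`two_mul_sum_block_lengths`).
-/

theorem two_mul_sum_block_lengths (N : ℕ) :
    2 * ∑ k ∈ Finset.range (N / 2 + 1), (2 * (N - 2 * k) + 1) = (N + 1) * (N + 2) := by
  induction N using Nat.twoStepInduction with
  | zero => simp
  | one => simp
  | more n ih _ =>
    -- Removing the `k = 0` term and shifting `k` turns the sum for `n + 2` into the one for `n`.
    have h : (n + 2) / 2 + 1 = (n / 2 + 1) + 1 := by omega
    rw [h, Finset.sum_range_succ']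
    have h2 : ∀ k, n + 2 - 2 * (k + 1) = n - 2 * k := fun k => by omega
    simp only [h2]
    rw [mul_add, ih]
    simp only [Nat.mul_zero, Nat.sub_zero]
    ring

/-- The gap set, with `m = N + 3`, as a union of integer intervals indexed by `k`. -/
theorem gap_set_eq_biUnion (N : ℕ) :
    {n : ℤ | ∃ i j k : ℕ, (i : ℤ) + (j : ℤ) + 2 * (k : ℤ) ≤ N ∧
        (i : ℤ) + 2 * (j : ℤ) + (k : ℤ) * (2 * (N + 3)) + 1 = n} =
      ((Finset.range (N / 2 + 1)).biUnion fun k : ℕ =>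
        Finset.Icc ((k : ℤ) * (2 * (N + 3)) + 1)
          ((k : ℤ) * (2 * (N + 3)) + 1 + 2 * (N - 2 * k)) : Finset ℤ) := by
  ext n
  simp only [Set.mem_setOf_eq, Finset.coe_biUnion, Finset.coe_range, Set.mem_Iio,
    Finset.coe_Icc, Set.mem_iUnion, Set.mem_Icc, exists_prop]
  constructor
  · rintro ⟨i, j, k, h, rfl⟩
    exact ⟨k, by omega, by linarith, by linarith⟩
  · rintro ⟨k, hk, h1, h2⟩
    -- With `t` the offset of `n` in its block, take `i = t % 2` and `j = t / 2`.
    obtain ⟨t, ht⟩ := Int.eq_ofNat_of_zero_le (sub_nonneg.mpr h1)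
    refine ⟨t % 2, t / 2, k, ?_, ?_⟩
    · have : (t : ℤ) ≤ 2 * (N - 2 * k) := by linarith
      omega
    · have : ((t % 2 : ℕ) : ℤ) + 2 * ((t / 2 : ℕ) : ℤ) = t := by omega
      linarith

theorem blocks_disjoint (N : ℕ) {a b : ℕ} (hab : a < b) :
    Disjoint
      (Finset.Icc ((a : ℤ) * (2 * (N + 3)) + 1) ((a : ℤ) * (2 * (N + 3)) + 1 + 2 * (N - 2 * a)))
      (Finset.Icc ((b : ℤ) * (2 * (N + 3)) + 1)
        ((b : ℤ) * (2 * (N + 3)) + 1 + 2 * (N - 2 * b))) := by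
  rw [Finset.disjoint_left]
  intro x hx hy
  rw [Finset.mem_Icc] at hx hy
  have h : (a : ℤ) + 1 ≤ b := by exact_mod_cast hab
  have := mul_le_mul_of_nonneg_right h (by positivity : (0 : ℤ) ≤ 2 * (N + 3))
  linarith [hx.2, hy.1, Int.natCast_nonneg a]

/-- Let `q ≥ 5` be an odd integer and `m = (q+1)/2`. The set
`{ i + 2j + k(q+1) + 1 : i, j, k ∈ ℕ, i + j + 2k ≤ m − 3 }` has exactly
`(q−1)(q−3)/8` elements. -/
theorem card_gap_set_rational (q m : ℤ) (hodd : Odd q) (hq : 5 ≤ q)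
    (hm : m = (q + 1) / 2) :
    (({n : ℤ | ∃ i j k : ℕ, (i : ℤ) + (j : ℤ) + 2 * (k : ℤ) ≤ m - 3 ∧
        (i : ℤ) + 2 * (j : ℤ) + (k : ℤ) * (q + 1) + 1 = n}).ncard : ℤ)
      = (q - 1) * (q - 3) / 8 := by
  obtain ⟨r, hr⟩ := hodd
  obtain ⟨N, hN⟩ := Int.eq_ofNat_of_zero_le (show 0 ≤ m - 3 by omega)
  have hq1 : q + 1 = 2 * ((N : ℤ) + 3) := by omega
  rw [hN, hq1, gap_set_eq_biUnion, Set.ncard_coe_finset, Finset.card_biUnion]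
  · have hc : ∀ k ∈ Finset.range (N / 2 + 1),
        (Finset.Icc ((k : ℤ) * (2 * (N + 3)) + 1)
          ((k : ℤ) * (2 * (N + 3)) + 1 + 2 * (N - 2 * k))).card = 2 * (N - 2 * k) + 1 := by
      intro k hk
      rw [Finset.mem_range] at hk
      rw [Int.card_Icc]
      omega
    rw [Finset.sum_congr rfl hc]
    have h := two_mul_sum_block_lengths N
    generalize ∑ k ∈ Finset.range (N / 2 + 1), (2 * (N - 2 * k) + 1) = S at h
    have h' : 2 * (S : ℤ) = (N + 1) * (N + 2) := by exact_mod_cast h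
    have hq2 : q = 2 * (N : ℤ) + 5 := by linarith
    have : (q - 1) * (q - 3) = 8 * (S : ℤ) := by
      rw [hq2]
      linear_combination (-4) * h'
    rw [this]
    omega
  · intro a _ b _ hab
    rcases lt_or_gt_of_ne hab with h | h
    · exact blocks_disjoint N h
    · exact (blocks_disjoint N h).symm
end

section
/- Let q ≥ 5 be an odd integer and set m = (q+1)/2. Then the set of integers { i + 2j + kq + 1 : i, j, k nonnegative integers with i + j + 2k ≤ m − 3 } has exactly (q−1)(q−3)/8 elements. -/
/-!
Put `M = m - 3`, so that `q = 2M + 5`. For fixed `k` with `2k ≤ M`, the sums `i + 2j` with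
`i + j ≤ M - 2k` fill the whole interval `[0, 2(M - 2k)]`, so the set is the union over
`0 ≤ k ≤ M / 2` of the intervals `[kq + 1, kq + 1 + 2(M - 2k)]`
(`gapSet_eq_biUnion`). Each of these has fewer than `q` elements, so they are pairwise disjoint,
and the cardinality is the arithmetic sum `∑ (2(M - 2k) + 1) = (M + 1)(M + 2) / 2`.
-/

/-- The gaps `i + 2j + kq + 1` with a given value of `k` form an interval. -/
theorem gapSet_eq_biUnion (M : ℕ) (q : ℤ) :
    {n : ℤ | ∃ i j k : ℕ, (i : ℤ) + (j : ℤ) + 2 * (k : ℤ) ≤ M ∧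
        (i : ℤ) + 2 * (j : ℤ) + (k : ℤ) * q + 1 = n} =
      ((Finset.range (M / 2 + 1)).biUnion fun k : ℕ =>
        Finset.Icc ((k : ℤ) * q + 1) ((k : ℤ) * q + 1 + 2 * ((M : ℤ) - 2 * k)) : Finset ℤ) := by
  ext n
  simp only [Set.mem_ofPred_eq, Finset.coe_biUnion, Finset.coe_range, Set.mem_Iio,
    Set.mem_iUnion, Finset.coe_Icc, Set.mem_Icc, exists_prop]
  constructor
  · rintro ⟨i, j, k, h, rfl⟩
    exact ⟨k, by omega, by omega, by omega⟩
  · rintro ⟨k, hk, h1, h2⟩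
    obtain ⟨r, hr⟩ : ∃ r : ℕ, n = (k : ℤ) * q + 1 + r :=
      ⟨(n - (k * q + 1)).toNat, by omega⟩
    -- the representation `r = i + 2j` with `i ∈ {0, 1}` minimises `i + j`
    exact ⟨r % 2, r / 2, k, by omega, by omega⟩

theorem sum_interval_lengths (M : ℤ) (n : ℕ) :
    ∑ k ∈ Finset.range n, (2 * (M - 2 * (k : ℤ)) + 1) = n * (2 * M + 1) - 2 * n * (n - 1) := by
  induction n with
  | zero => simp
  | succ n ih =>
    rw [Finset.sum_range_succ, ih]
    push_cast
    ring

/-- Let `q ≥ 5` be an odd integer and `m = (q+1)/2`. The set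
`{ i + 2j + kq + 1 : i, j, k ∈ ℕ, i + j + 2k ≤ m − 3 }` has exactly
`(q−1)(q−3)/8` elements. -/
theorem card_gap_set_nonrational (q m : ℤ) (hodd : Odd q) (hq : 5 ≤ q)
    (hm : m = (q + 1) / 2) :
    (({n : ℤ | ∃ i j k : ℕ, (i : ℤ) + (j : ℤ) + 2 * (k : ℤ) ≤ m - 3 ∧
        (i : ℤ) + 2 * (j : ℤ) + (k : ℤ) * q + 1 = n}).ncard : ℤ)
      = (q - 1) * (q - 3) / 8 := by
  obtain ⟨M, hM⟩ : ∃ M : ℕ, m - 3 = M := ⟨(m - 3).toNat, by omega⟩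
  have hqM : q = 2 * M + 5 := by
    obtain ⟨c, hc⟩ := hodd
    omega
  rw [hM, gapSet_eq_biUnion, Set.ncard_coe_finset, Finset.card_biUnion]
  · have hcard : ∀ k ∈ Finset.range (M / 2 + 1),
        ((Finset.Icc ((k : ℤ) * q + 1) ((k : ℤ) * q + 1 + 2 * ((M : ℤ) - 2 * k))).card : ℤ)
          = 2 * ((M : ℤ) - 2 * k) + 1 := by
      intro k hk
      rw [Finset.mem_range] at hk
      rw [Int.card_Icc]
      omega
    rw [Nat.cast_sum, Finset.sum_congr rfl hcard, sum_interval_lengths]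
    symm
    apply Int.ediv_eq_of_eq_mul_right (by norm_num)
    rw [hqM]
    rcases Nat.even_or_odd' M with ⟨t, rfl | rfl⟩
    · rw [show 2 * t / 2 = t by omega]
      push_cast
      ring
    · rw [show (2 * t + 1) / 2 = t by omega]
      push_cast
      ring
  · -- an element of the `k`-th interval lies in `[kq + 1, (k + 1)q]`, which determines `k`
    have key : ∀ a b : ℕ, a < b → ∀ n : ℤ,
        n ≤ a * q + 1 + 2 * ((M : ℤ) - 2 * a) → b * q + 1 ≤ n → False := by
      intro a b hab n h1 h2
      have : ((a : ℤ) + 1) * q ≤ b * q :=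
        mul_le_mul_of_nonneg_right (by exact_mod_cast hab) (by omega)
      rw [add_mul, one_mul] at this
      omega
    intro a _ b _ hab
    rw [Function.onFun, Finset.disjoint_left]
    intro n ha hb
    rw [Finset.mem_Icc] at ha hb
    rcases Nat.lt_or_gt_of_ne hab with h | h
    · exact key a b h n ha.2 hb.1
    · exact key b a h n hb.2 ha.1
end

section
/- Let m ≥ 4 be an integer. Then the set of integers G = { 3mk + 2ℓ₀ + (3j+2)ℓ₁ + s + 1 : j, k, ℓ₀, ℓ₁, s nonnegative integers with s ≤ 1, j ≤ m−2, and 3k + ℓ₀ + (j+1)ℓ₁ + s ≤ m−3 } has exactly (m−1)(m−2)/2 elements. -/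
/-!
Write `t = m - 3 - 3k` for the weight left to `ℓ₀, ℓ₁, s` once `k` is fixed. The values
`2ℓ₀ + (3j+2)ℓ₁ + s` then fill exactly the interval `[0, max 1 (3t))` (`exists_repr_iff`):
for `ℓ₁ ≥ 1` such a value is at most `3t - ℓ₁`, and conversely `ℓ₁ = 1` with `s = ℓ₀ = 0`, `s = 1`
or `ℓ₀ = 1` gives the values `3j+2`, `3j+3`, `3j+4`. As `max 1 (3t) ≤ 3m`, the intervals
for different `k` are disjoint after translation by `3mk + 1`, so the cardinality is the
sum of their lengths (`two_mul_sum_lengths`).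
-/

/-- For fixed `k`, with `t = m - 3 - 3k`, the attained values form an initial segment of `ℕ`. -/
lemma exists_repr_iff (m t x : ℕ) (hm : t + 3 ≤ m) :
    (∃ j l0 l1 s : ℕ, s ≤ 1 ∧ j ≤ m - 2 ∧ l0 + (j + 1) * l1 + s ≤ t ∧
      2 * l0 + (3 * j + 2) * l1 + s = x) ↔ x < max 1 (3 * t) := by
  constructor
  · rintro ⟨j, l0, l1, s, hs, -, h, rfl⟩
    -- after expanding, everything is linear in `j * l1`, `l0`, `l1`, `s`
    have h1 : (j + 1) * l1 = j * l1 + l1 := by ring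
    have h2 : (3 * j + 2) * l1 = 3 * (j * l1) + 2 * l1 := by ring
    rw [h1] at h
    rw [h2]
    rcases Nat.eq_zero_or_pos l1 with rfl | hl
    · simp only [Nat.mul_zero] at *
      omega
    · omega
  · intro hx
    rcases Nat.lt_or_ge x 2 with h2 | h2
    · exact ⟨0, 0, 0, x, by omega, by omega, by omega, by omega⟩
    · obtain ⟨j, r, hr, rfl⟩ : ∃ j r, r < 3 ∧ x = 3 * j + 2 + r :=
        ⟨(x - 2) / 3, (x - 2) % 3, by omega, by omega⟩
      obtain rfl | rfl | rfl : r = 0 ∨ r = 1 ∨ r = 2 := by omega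
      · exact ⟨j, 0, 1, 0, by omega, by omega, by omega, by omega⟩
      · exact ⟨j, 0, 1, 1, by omega, by omega, by omega, by omega⟩
      · exact ⟨j, 1, 1, 0, by omega, by omega, by omega, by omega⟩

/-- Induction in steps of three: replacing `t` by `t + 3` adds one interval, of length `3t + 9`. -/
lemma two_mul_sum_lengths : ∀ t : ℕ,
    2 * ∑ k ∈ Finset.range (t / 3 + 1), max 1 (3 * (t - 3 * k)) = (t + 1) * (t + 2)
  | 0 => by decide
  | 1 => by decide
  | 2 => by decide
  | t + 3 => by
    have ih := two_mul_sum_lengths t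
    rw [show (t + 3) / 3 + 1 = (t / 3 + 1) + 1 by omega, Finset.sum_range_succ']
    have hshift : ∀ k, t + 3 - 3 * (k + 1) = t - 3 * k := fun k => by omega
    simp only [hshift]
    have hmax : max 1 (3 * (t + 3 - 3 * 0)) = 3 * t + 9 := by omega
    rw [hmax, Nat.mul_add, ih]
    ring

/-- Let `m ≥ 4`. The set
`G = { 3mk + 2ℓ₀ + (3j+2)ℓ₁ + s + 1 : j,k,ℓ₀,ℓ₁,s ∈ ℕ, s ≤ 1, j ≤ m−2,
3k + ℓ₀ + (j+1)ℓ₁ + s ≤ m−3 }` has exactly `(m−1)(m−2)/2` elements. -/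
theorem card_gap_set_large_order_rational (m : ℕ) (hm : 4 ≤ m) :
    {n : ℕ | ∃ j k l0 l1 s : ℕ, s ≤ 1 ∧ j ≤ m - 2 ∧
        3 * k + l0 + (j + 1) * l1 + s ≤ m - 3 ∧
        3 * m * k + 2 * l0 + (3 * j + 2) * l1 + s + 1 = n}.ncard
      = (m - 1) * (m - 2) / 2 := by
  obtain ⟨t, rfl⟩ : ∃ t, m = t + 3 := ⟨m - 3, by omega⟩
  have hset : {n : ℕ | ∃ j k l0 l1 s : ℕ, s ≤ 1 ∧ j ≤ t + 3 - 2 ∧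
        3 * k + l0 + (j + 1) * l1 + s ≤ t + 3 - 3 ∧
        3 * (t + 3) * k + 2 * l0 + (3 * j + 2) * l1 + s + 1 = n} =
      ((Finset.range (t / 3 + 1)).biUnion fun k =>
        (Finset.range (max 1 (3 * (t - 3 * k)))).image
          fun x => 3 * (t + 3) * k + 1 + x : Finset ℕ) := by
    ext n
    simp only [Set.mem_ofPred_eq, Finset.coe_biUnion, Finset.coe_image, Set.mem_iUnion,
      Set.mem_image, Finset.mem_coe, Finset.mem_range]
    constructor
    · rintro ⟨j, k, l0, l1, s, hs, hj, h, rfl⟩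
      refine ⟨k, by omega, _, (exists_repr_iff (t + 3) (t - 3 * k) _ (by omega)).1
        ⟨j, l0, l1, s, hs, hj, by omega, rfl⟩, by omega⟩
    · rintro ⟨k, hk, x, hx, rfl⟩
      obtain ⟨j, l0, l1, s, hs, hj, h, rfl⟩ :=
        (exists_repr_iff (t + 3) (t - 3 * k) _ (by omega)).2 hx
      exact ⟨j, k, l0, l1, s, hs, hj, by omega, by omega⟩
  rw [hset, Set.ncard_coe_finset, Finset.card_biUnion]
  · simp only [Finset.card_image_of_injective _ (add_right_injective _), Finset.card_range]
    have h := two_mul_sum_lengths t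
    rw [show (t + 3 - 1) * (t + 3 - 2) = (t + 1) * (t + 2) by
      rw [Nat.mul_comm]; rfl, ← h]
    omega
  · intro k _ k' _ hne
    rw [Function.onFun, Finset.disjoint_left]
    simp only [Finset.mem_image, Finset.mem_range, not_exists, not_and]
    rintro _ ⟨x, hx, rfl⟩ y hy hxy
    -- both offsets are below `3 * (t + 3)`, so the quotient by `3 * (t + 3)` recovers the index
    have hx' : x < 3 * (t + 3) := by omega
    have hy' : y < 3 * (t + 3) := by omega
    have heq : 3 * (t + 3) * k' + y = 3 * (t + 3) * k + x := by omega
    have hq := congrArg (· / (3 * (t + 3))) heq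
    simp only [Nat.mul_add_div (show 3 * (t + 3) > 0 by omega), Nat.div_eq_of_lt hx',
      Nat.div_eq_of_lt hy', Nat.add_zero] at hq
    exact hne hq.symm
end

section
/- Let m ≥ 4 be an integer. Then the set of integers Ḡ = { (3m−1)k + 2ℓ₀ + (3j+2)ℓ₁ + s + 1 : j, k, ℓ₀, ℓ₁, s nonnegative integers with s ≤ 1, j ≤ m−2, and 3k + ℓ₀ + (j+1)ℓ₁ + s ≤ m−3 } has exactly (m−1)(m−2)/2 elements. -/
/-!
Fix `k` and put `d = m - 3 - 3k`. The offsets `t = 2ℓ₀ + (3j+2)ℓ₁ + s` allowed by the weight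
condition `w = ℓ₀ + (j+1)ℓ₁ + s ≤ d` fill an initial segment: a nonzero offset satisfies
`t ≤ 3w - 1`, and conversely each `t` is reached with the least weight `w` with `t ≤ 3w - 1`,
using `ℓ₁ ≤ 1` (`offset_iff`). So the offsets are exactly `t < max 1 (3d)`. Since
`max 1 (3d) ≤ 3m - 1`, the blocks for different `k` are disjoint, and the cardinality is
`∑ max 1 (3(m - 3 - 3k))` over `3k ≤ m - 3`, which `sum_block` evaluates.
-/

/-- The offsets of weight at most `d` are exactly the `t < max 1 (3d)`; here `M ≥ d` makes the
bound on `j` harmless. -/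
lemma offset_iff (d M t : ℕ) (hM : d ≤ M) :
    (∃ j l0 l1 s : ℕ, s ≤ 1 ∧ j ≤ M ∧ l0 + (j + 1) * l1 + s ≤ d ∧
      2 * l0 + (3 * j + 2) * l1 + s = t) ↔ t < max 1 (3 * d) := by
  constructor
  · rintro ⟨j, l0, l1, s, hs, -, hw, rfl⟩
    have e1 : (j + 1) * l1 = j * l1 + l1 := by ring
    have e2 : (3 * j + 2) * l1 = 3 * (j * l1) + 2 * l1 := by ring
    rw [e1] at hw
    rw [e2]
    -- the product `j * l1` vanishes when `l1 = 0`, so the rest is linear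
    rcases Nat.eq_zero_or_pos l1 with h | h
    · subst h
      omega
    · generalize j * l1 = a at *
      omega
  · intro ht
    obtain rfl | rfl | h2 : t = 0 ∨ t = 1 ∨ 2 ≤ t := by omega
    · exact ⟨0, 0, 0, 0, by omega, by omega, by omega, by omega⟩
    · exact ⟨0, 0, 0, 1, by omega, by omega, by omega, by omega⟩
    -- `t = 3j + 2 + r` with `r < 3`: `r = 1` costs `s = 1`, and `r = 2` costs `ℓ₀ = 1`
    · obtain ⟨j, h | h | h⟩ : ∃ j, t = 3 * j + 2 ∨ t = 3 * j + 3 ∨ t = 3 * j + 4 :=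
        ⟨(t - 2) / 3, by omega⟩
      · exact ⟨j, 0, 1, 0, by omega, by omega, by omega, by omega⟩
      · exact ⟨j, 0, 1, 1, by omega, by omega, by omega, by omega⟩
      · exact ⟨j, 1, 1, 0, by omega, by omega, by omega, by omega⟩

lemma sum_block (r : ℕ) (hr : r < 3) (q : ℕ) :
    2 * ∑ k ∈ Finset.range (q + 1), max 1 (3 * (3 * q + r - 3 * k))
      = (3 * q + r + 2) * (3 * q + r + 1) := by
  induction q with
  | zero => interval_cases r <;> simp
  | succ q ih =>
    rw [Finset.sum_range_succ']
    have h : ∀ k ∈ Finset.range (q + 1), max 1 (3 * (3 * (q + 1) + r - 3 * (k + 1)))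
        = max 1 (3 * (3 * q + r - 3 * k)) := by
      intro k _
      congr 2
      omega
    rw [Finset.sum_congr rfl h, mul_add, ih, max_eq_right (by omega)]
    simp only [mul_zero, Nat.sub_zero]
    ring

/-- Let `m ≥ 4`. The set
`Ḡ = { (3m−1)k + 2ℓ₀ + (3j+2)ℓ₁ + s + 1 : j,k,ℓ₀,ℓ₁,s ∈ ℕ, s ≤ 1, j ≤ m−2,
3k + ℓ₀ + (j+1)ℓ₁ + s ≤ m−3 }` has exactly `(m−1)(m−2)/2` elements. -/
theorem card_gap_set_large_order_nonrational (m : ℕ) (hm : 4 ≤ m) :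
    {n : ℕ | ∃ j k l0 l1 s : ℕ, s ≤ 1 ∧ j ≤ m - 2 ∧
        3 * k + l0 + (j + 1) * l1 + s ≤ m - 3 ∧
        (3 * m - 1) * k + 2 * l0 + (3 * j + 2) * l1 + s + 1 = n}.ncard
      = (m - 1) * (m - 2) / 2 := by
  obtain ⟨q, r, hr, rfl⟩ : ∃ q r, r < 3 ∧ m = 3 * q + r + 3 :=
    ⟨(m - 3) / 3, (m - 3) % 3, by omega, by omega⟩
  set N := 3 * (3 * q + r + 3) - 1 with hN
  have key : {n : ℕ | ∃ j k l0 l1 s : ℕ, s ≤ 1 ∧ j ≤ 3 * q + r + 3 - 2 ∧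
        3 * k + l0 + (j + 1) * l1 + s ≤ 3 * q + r + 3 - 3 ∧
        N * k + 2 * l0 + (3 * j + 2) * l1 + s + 1 = n}
      = (((Finset.range (q + 1)).sigma
          fun k => Finset.range (max 1 (3 * (3 * q + r - 3 * k)))).image
          fun p => N * p.1 + p.2 + 1 : Finset ℕ) := by
    ext n
    simp only [Set.mem_setOf_eq, Finset.coe_image, Set.mem_image, Finset.mem_coe,
      Finset.mem_sigma, Finset.mem_range, Sigma.exists]
    constructor
    · rintro ⟨j, k, l0, l1, s, hs, hj, hw, rfl⟩
      refine ⟨k, 2 * l0 + (3 * j + 2) * l1 + s, ⟨by omega, ?_⟩, by ring⟩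
      exact (offset_iff _ (3 * q + r + 3 - 2) _ (by omega)).1
        ⟨j, l0, l1, s, hs, hj, by omega, rfl⟩
    · rintro ⟨k, t, ⟨hk, ht⟩, rfl⟩
      obtain ⟨j, l0, l1, s, hs, hj, hw, rfl⟩ :=
        (offset_iff _ (3 * q + r + 3 - 2) _ (by omega)).2 ht
      exact ⟨j, k, l0, l1, s, hs, hj, by omega, by ring⟩
  rw [key, Set.ncard_coe_finset, Finset.card_image_of_injOn, Finset.card_sigma]
  · simp only [Finset.card_range]
    have h := sum_block r hr q
    have e1 : 3 * q + r + 3 - 1 = 3 * q + r + 2 := by omega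
    have e2 : 3 * q + r + 3 - 2 = 3 * q + r + 1 := by omega
    rw [e1, e2, ← h]
    omega
  -- offsets are `< N`, so `k` and `t` are the quotient and remainder of `N * k + t` by `N`
  · rintro ⟨k, t⟩ h ⟨k', t'⟩ h' e
    simp only [Finset.coe_sigma, Set.mem_sigma_iff, Finset.mem_coe, Finset.mem_range] at h h' e
    have ht : t < N := by omega
    have ht' : t' < N := by omega
    have e0 : N * k + t = N * k' + t' := by omega
    have hk : k = k' := by
      have := congrArg (· / N) e0
      simpa [Nat.mul_add_div (by omega : N > 0), Nat.div_eq_of_lt ht, Nat.div_eq_of_lt ht']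
        using this
    subst hk
    obtain rfl : t = t' := by omega
    rfl
end

section
/- Let m ≥ 4 and i be integers with 1 ≤ i ≤ m−2. Then the set of integers G = { 3mk + 2ℓ₀ + (3j+2)ℓ₁ + (3i+3)ℓ₂ + s + 1 : j, k, ℓ₀, ℓ₁, ℓ₂, s nonnegative integers with s ≤ 1, j ≤ i−1, and 3k + ℓ₀ + (j+1)ℓ₁ + (i+1)ℓ₂ + s ≤ m−3 } has exactly (m−1)(m−2)/2 elements. -/
/-!
Since `3 * k ≤ m - 3`, put `M = m - 3 - 3 * k`, the weight left once `k` is fixed. A choice of the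
other variables of weight `w = l0 + (j+1) l1 + (i+1) l2 + s ≤ M` has value
`v = 2 l0 + (3j+2) l1 + (3i+3) l2 + s = 3 w - (l0 + l1 + 2 s)`, so `v ≤ 3 M`.

The attained values are all `v ≤ 3 M - 2` together with exactly one of `3 M` and `3 M - 1`
(`attained_iff`): `3 M` needs `l0 = l1 = s = 0`, hence `i + 1 ∣ M`, whereas `3 M - 1` needs
`l0 + l1 = 1` and `s = 0`, which forces `M` to have a nonzero residue modulo `i + 1`.
So there are `3 M` values if `M > 0`, and one if `M = 0`. As `v < 3 m`, elements
`3 m k + v + 1` with different `k` differ, and summing over `k` gives `(m - 1) (m - 2) / 2`.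
-/

/-- `v` is a value `2 l0 + (3j+2) l1 + (3i+3) l2 + s` of admissible variables of total weight
at most `M`, the variable `k` being left out. -/
def Attained (i M v : ℕ) : Prop :=
  ∃ j l0 l1 l2 s : ℕ, s ≤ 1 ∧ j ≤ i - 1 ∧
    l0 + (j + 1) * l1 + (i + 1) * l2 + s ≤ M ∧
    2 * l0 + (3 * j + 2) * l1 + (3 * i + 3) * l2 + s = v

/-- The extremal attained value: the one of `3 * M`, `3 * M - 1` that occurs. -/
def topValue (i M : ℕ) : ℕ := if (i + 1) ∣ M then 3 * M else 3 * M - 1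

lemma topValue_le (i M : ℕ) : topValue i M ≤ 3 * M := by
  unfold topValue; split_ifs <;> omega

/-- A `w` not divisible by `i + 1` has residue `j + 1` with `j ≤ i - 1`, so weight `w` carries the
value `3 * w - 1` by taking `l1 = 1`. -/
lemma exists_residue {i w : ℕ} (h : ¬ (i + 1) ∣ w) :
    ∃ j l2 : ℕ, j ≤ i - 1 ∧ w = (j + 1) + (i + 1) * l2 := by
  have h0 : w % (i + 1) ≠ 0 := fun h' => h (Nat.dvd_of_mod_eq_zero h')
  have h1 := Nat.mod_lt w (Nat.succ_pos i)
  have h2 := Nat.mod_add_div w (i + 1)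
  refine ⟨w % (i + 1) - 1, w / (i + 1), ?_, ?_⟩
  · simp only [Nat.succ_eq_add_one] at h1; omega
  · rw [Nat.sub_add_cancel (by omega)]; exact h2.symm

lemma attained_topValue (i M : ℕ) : Attained i M (topValue i M) := by
  unfold topValue
  split_ifs with h
  · obtain ⟨c, rfl⟩ := h
    exact ⟨0, 0, 0, c, 0, by omega, by omega, by omega, by ring⟩
  · obtain ⟨j, c, hj, rfl⟩ := exists_residue h
    refine ⟨j, 0, 1, c, 0, by omega, hj, by omega, ?_⟩
    have : 3 * (j + 1 + (i + 1) * c) = (3 * j + 2) + (3 * i + 3) * c + 1 := by ring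
    omega

lemma attained_of_add_two_le {i M v : ℕ} (hi : 1 ≤ i) (hv : v + 2 ≤ 3 * M) :
    Attained i M v := by
  obtain ⟨w, hw | hw | hw⟩ : ∃ w, v = 3 * w ∨ v = 3 * w + 1 ∨ v = 3 * w + 2 :=
    ⟨v / 3, by omega⟩
  -- `hv` leaves `w + 1 ≤ M` in the first two cases and `w + 2 ≤ M` in the third.
  · by_cases h : (i + 1) ∣ w
    · obtain ⟨c, rfl⟩ := h
      exact ⟨0, 0, 0, c, 0, by omega, by omega, by omega, by rw [hw]; ring⟩
    · obtain ⟨j, c, hj, rfl⟩ := exists_residue h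
      exact ⟨j, 0, 1, c, 1, by omega, hj, by omega, by rw [hw]; ring⟩
  · by_cases h : (i + 1) ∣ w
    · obtain ⟨c, rfl⟩ := h
      exact ⟨0, 0, 0, c, 1, by omega, by omega, by omega, by rw [hw]; ring⟩
    · obtain ⟨j, c, hj, rfl⟩ := exists_residue h
      exact ⟨j, 1, 1, c, 0, by omega, hj, by omega, by rw [hw]; ring⟩
  · by_cases h : (i + 1) ∣ (w + 1)
    · obtain ⟨c, hc⟩ := h
      obtain ⟨c, rfl⟩ : ∃ d, c = d + 1 := by
        cases c with
        | zero => omega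
        | succ d => exact ⟨d, rfl⟩
      -- One block `3i + 3` is traded for `(3i - 1) + 2 + 1 = 3i + 2`, of weight `i + 2`.
      obtain ⟨i, rfl⟩ : ∃ e, i = e + 1 := ⟨i - 1, by omega⟩
      have hw' : w = (i + 1 + 1) * c + i + 1 := by
        have : (i + 1 + 1) * (c + 1) = (i + 1 + 1) * c + i + 1 + 1 := by ring
        omega
      subst hw'
      exact ⟨i, 1, 1, c, 1, by omega, by omega, by omega, by rw [hw]; ring⟩
    · obtain ⟨j, c, hj, hc⟩ := exists_residue h
      refine ⟨j, 0, 1, c, 0, by omega, hj, by omega, ?_⟩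
      have : 3 * (j + 1 + (i + 1) * c) = (3 * j + 2) + (3 * i + 3) * c + 1 := by ring
      omega

lemma attained_iff {i M v : ℕ} (hi : 1 ≤ i) :
    Attained i M v ↔ v + 2 ≤ 3 * M ∨ v = topValue i M := by
  refine ⟨?_, ?_⟩
  · rintro ⟨j, l0, l1, l2, s, hs, hj, hw, hv⟩
    by_contra! hcon
    obtain ⟨h1, h2⟩ := hcon
    have key : v + (l0 + l1 + 2 * s) =
        3 * (l0 + (j + 1) * l1 + (i + 1) * l2 + s) := by rw [← hv]; ring
    have hs0 : s = 0 := by omega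
    subst hs0
    have hwM : l0 + (j + 1) * l1 + (i + 1) * l2 = M := by omega
    have hdef : l0 + l1 = 0 ∨ l0 + l1 = 1 := by omega
    apply h2
    unfold topValue
    rcases hdef with h | h
    · obtain ⟨rfl, rfl⟩ : l0 = 0 ∧ l1 = 0 := by omega
      rw [if_pos ⟨l2, by omega⟩]; omega
    · have hres : ∃ a, 1 ≤ a ∧ a ≤ i ∧ M = a + (i + 1) * l2 := by
        rcases (show (l0 = 1 ∧ l1 = 0) ∨ (l0 = 0 ∧ l1 = 1) by omega) with
          ⟨rfl, rfl⟩ | ⟨rfl, rfl⟩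
        · exact ⟨1, le_rfl, hi, by omega⟩
        · exact ⟨j + 1, by omega, by omega, by omega⟩
      obtain ⟨a, ha1, ha2, ha⟩ := hres
      have hnd : ¬ (i + 1) ∣ M := by
        rw [ha, Nat.dvd_add_left (Dvd.intro _ rfl)]
        exact Nat.not_dvd_of_pos_of_lt ha1 (by omega)
      rw [if_neg hnd]; omega
  · rintro (h | rfl)
    · exact attained_of_add_two_le hi h
    · exact attained_topValue i M

/-- The attained values for residual weight `M`, as a finset. -/
def valueSet (i M : ℕ) : Finset ℕ := insert (topValue i M) (Finset.range (3 * M - 1))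

lemma mem_valueSet {i M v : ℕ} (hi : 1 ≤ i) : v ∈ valueSet i M ↔ Attained i M v := by
  rw [attained_iff hi, valueSet, Finset.mem_insert, Finset.mem_range]
  omega

lemma card_valueSet (i M : ℕ) : (valueSet i M).card = if M = 0 then 1 else 3 * M := by
  have h : topValue i M ∉ Finset.range (3 * M - 1) := by
    rw [Finset.mem_range, topValue]; split_ifs <;> omega
  rw [valueSet, Finset.card_insert_of_notMem h, Finset.card_range]
  split_ifs <;> omega

lemma two_mul_sum_card {r : ℕ} (hr : r < 3) (t : ℕ) :
    2 * ∑ u ∈ Finset.range (t + 1), (if 3 * u + r = 0 then 1 else 3 * (3 * u + r))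
      = (3 * t + r + 2) * (3 * t + r + 1) := by
  induction t with
  | zero => interval_cases r <;> simp
  | succ t ih =>
    rw [Finset.sum_range_succ, mul_add, ih, if_neg (by omega)]
    ring

/-- Let `m ≥ 4` and `1 ≤ i ≤ m−2`. The set
`G = { 3mk + 2ℓ₀ + (3j+2)ℓ₁ + (3i+3)ℓ₂ + s + 1 : j,k,ℓ₀,ℓ₁,ℓ₂,s ∈ ℕ, s ≤ 1, j ≤ i−1,
3k + ℓ₀ + (j+1)ℓ₁ + (i+1)ℓ₂ + s ≤ m−3 }` has exactly `(m−1)(m−2)/2` elements. -/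
theorem card_gap_set_small_order_rational (m i : ℕ) (hm : 4 ≤ m) (hi1 : 1 ≤ i)
    (hi2 : i ≤ m - 2) :
    {n : ℕ | ∃ j k l0 l1 l2 s : ℕ, s ≤ 1 ∧ j ≤ i - 1 ∧
        3 * k + l0 + (j + 1) * l1 + (i + 1) * l2 + s ≤ m - 3 ∧
        3 * m * k + 2 * l0 + (3 * j + 2) * l1 + (3 * i + 3) * l2 + s + 1 = n}.ncard
      = (m - 1) * (m - 2) / 2 := by
  obtain ⟨t, r, hr, rfl⟩ : ∃ t r, r < 3 ∧ m = 3 * t + r + 3 :=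
    ⟨(m - 3) / 3, (m - 3) % 3, by omega, by omega⟩
  -- Indexing by `u = t - k`, the residual weight is `3 * u + r`.
  let S : Finset (Σ _ : ℕ, ℕ) := (Finset.range (t + 1)).sigma fun u => valueSet i (3 * u + r)
  let f : (Σ _ : ℕ, ℕ) → ℕ := fun p => 3 * (3 * t + r + 3) * (t - p.1) + p.2 + 1
  have hbound : ∀ p ∈ S, p.1 ≤ t ∧ p.2 < 3 * (3 * t + r + 3) := by
    rintro ⟨u, v⟩ hp
    simp only [S, Finset.mem_sigma, Finset.mem_range, valueSet, Finset.mem_insert] at hp ⊢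
    have := topValue_le i (3 * u + r)
    omega
  have hinj : Set.InjOn f (S : Set (Σ _ : ℕ, ℕ)) := by
    rintro ⟨u, v⟩ hp ⟨u', v'⟩ hp' heq
    obtain ⟨hu, hv⟩ := hbound _ hp
    obtain ⟨hu', hv'⟩ := hbound _ hp'
    simp only [f] at hu hv hu' hv' heq
    have heq' : 3 * (3 * t + r + 3) * (t - u) + v = 3 * (3 * t + r + 3) * (t - u') + v' := by
      omega
    have hpos : 0 < 3 * (3 * t + r + 3) := by omega
    -- The quotient by `3 * m` recovers `k`.
    have hk : t - u = t - u' := by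
      have := congrArg (· / (3 * (3 * t + r + 3))) heq'
      simpa only [Nat.mul_add_div hpos, Nat.div_eq_of_lt hv, Nat.div_eq_of_lt hv',
        Nat.add_zero] using this
    rw [hk] at heq'
    obtain rfl : u = u' := by omega
    obtain rfl : v = v' := by omega
    rfl
  have hset : {n : ℕ | ∃ j k l0 l1 l2 s : ℕ, s ≤ 1 ∧ j ≤ i - 1 ∧
        3 * k + l0 + (j + 1) * l1 + (i + 1) * l2 + s ≤ (3 * t + r + 3) - 3 ∧
        3 * (3 * t + r + 3) * k + 2 * l0 + (3 * j + 2) * l1 + (3 * i + 3) * l2 + s + 1 = n}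
      = ((S.image f : Finset ℕ) : Set ℕ) := by
    ext n
    simp only [Set.mem_ofPred_eq, Finset.coe_image, Set.mem_image, Finset.mem_coe, S,
      Finset.mem_sigma, Finset.mem_range, mem_valueSet hi1]
    constructor
    · rintro ⟨j, k, l0, l1, l2, s, hs, hj, hw, hn⟩
      have hkt : k ≤ t := by omega
      refine ⟨⟨t - k, _⟩, ⟨by simp only; omega, j, l0, l1, l2, s, hs, hj, ?_, rfl⟩, ?_⟩
      · simp only; omega
      · simp only [f]
        rw [Nat.sub_sub_self hkt]
        omega
    · rintro ⟨⟨u, v⟩, ⟨hu, j, l0, l1, l2, s, hs, hj, hw, hv⟩, hn⟩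
      simp only [f] at hu hw hv hn
      exact ⟨j, t - u, l0, l1, l2, s, hs, hj, by omega, by omega⟩
  rw [hset, Set.ncard_coe_finset, Finset.card_image_of_injOn hinj, Finset.card_sigma]
  simp only [card_valueSet]
  have hsum := two_mul_sum_card hr t
  have e1 : 3 * t + r + 3 - 1 = 3 * t + r + 2 := by omega
  have e2 : 3 * t + r + 3 - 2 = 3 * t + r + 1 := by omega
  rw [e1, e2, ← hsum]
  omega
end

section
/- Let m ≥ 4 and i be integers with 1 ≤ i ≤ m−2. Then the set of integers Ḡ = { (3m−1)k + 2ℓ₀ + (3j+2)ℓ₁ + (3i+3)ℓ₂ + s + 1 : j, k, ℓ₀, ℓ₁, ℓ₂, s nonnegative integers with s ≤ 1, j ≤ i−1, and 3k + ℓ₀ + (j+1)ℓ₁ + (i+1)ℓ₂ + s ≤ m−3 } has exactly (m−1)(m−2)/2 elements. -/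
/-!
Put `w = ℓ₀ + (j+1)ℓ₁ + (i+1)ℓ₂ + s` (the weight) and `v = 2ℓ₀ + (3j+2)ℓ₁ + (3i+3)ℓ₂ + s`, so that
`v + (ℓ₀ + ℓ₁ + 2s) = 3w`. For fixed `k` the constraint reads `w ≤ N` with `N = m - 3 - 3k`, and
`exists_rep_iff` shows that the values `v` reached are exactly `0, …, 3N - 2` together with one
further value, `3N` or `3N - 1` according to whether `i + 1` divides `N`. Hence there are `3N` of
them if `N ≥ 1`, and one if `N = 0`.

Since `v ≤ 3N < 3m - 1`, different `k` contribute disjoint blocks, so the cardinality is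
`∑ₖ max(3(m - 3 - 3k), 1)`, which `sum_block_card` evaluates by an induction in steps of three.
-/

/-- The values `v` reached by parameters of weight at most `N`; see `exists_rep_iff`. For `N = 0`
truncated subtraction makes this `{0}`, as it should be. -/
def blockValues (i N : ℕ) : Finset ℕ :=
  insert (if (i + 1) ∣ N then 3 * N else 3 * N - 1) (Finset.range (3 * N - 1))

lemma card_blockValues (i N : ℕ) : (blockValues i N).card = 3 * N - 1 + 1 := by
  rw [blockValues, Finset.card_insert_of_notMem, Finset.card_range]
  rw [Finset.mem_range]
  split_ifs <;> omega

lemma le_of_mem_blockValues {i N v : ℕ} (h : v ∈ blockValues i N) : v ≤ 3 * N := by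
  rw [blockValues, Finset.mem_insert, Finset.mem_range] at h
  split_ifs at h <;> omega

lemma exists_rep_iff (i N v : ℕ) (hi : 1 ≤ i) :
    (∃ j l0 l1 l2 s : ℕ, s ≤ 1 ∧ j ≤ i - 1 ∧ l0 + (j + 1) * l1 + (i + 1) * l2 + s ≤ N ∧
      2 * l0 + (3 * j + 2) * l1 + (3 * i + 3) * l2 + s = v) ↔ v ∈ blockValues i N := by
  rw [blockValues, Finset.mem_insert, Finset.mem_range]
  constructor
  · rintro ⟨j, l0, l1, l2, s, hs, hj, hw, hv⟩
    have hvw : v + (l0 + l1 + 2 * s) = 3 * (l0 + (j + 1) * l1 + (i + 1) * l2 + s) := by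
      rw [← hv]; ring
    by_cases hlt : l0 + (j + 1) * l1 + (i + 1) * l2 + s < N
    · right; omega
    have hN : N = l0 + (j + 1) * l1 + (i + 1) * l2 + s := by omega
    by_cases hd : 2 ≤ l0 + l1 + 2 * s
    · by_cases hN0 : N = 0
      · left; subst hN0; simp; omega
      · right; omega
    left
    obtain rfl : s = 0 := by omega
    -- The deficit `3N - v = l0 + l1` is now at most `1`, which leaves `N` congruent to `0`, `j + 1`
    -- or `1` modulo `i + 1`.
    have hcases : (l0 = 0 ∧ l1 = 0) ∨ (l0 = 0 ∧ l1 = 1) ∨ (l0 = 1 ∧ l1 = 0) := by omega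
    have hmod (r : ℕ) (h1 : 1 ≤ r) (h2 : r ≤ i) (h : N = (i + 1) * l2 + r) : ¬ (i + 1) ∣ N := by
      rw [h, Nat.dvd_add_right (Dvd.intro _ rfl)]
      exact Nat.not_dvd_of_pos_of_lt h1 (by omega)
    rcases hcases with ⟨rfl, rfl⟩ | ⟨rfl, rfl⟩ | ⟨rfl, rfl⟩
    · rw [if_pos ⟨l2, by omega⟩]; omega
    · rw [if_neg (hmod (j + 1) (by omega) (by omega) (by omega))]; omega
    · rw [if_neg (hmod 1 (by omega) (by omega) (by omega))]; omega
  · have hlin (l : ℕ) : (3 * i + 3) * l = 3 * ((i + 1) * l) := by ring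
    simp only [hlin]
    rintro (h | h)
    · have hdm := Nat.div_add_mod N (i + 1)
      have hr : N % (i + 1) < i + 1 := Nat.mod_lt N (Nat.succ_pos i)
      split_ifs at h with hdvd
      · exact ⟨0, 0, 0, N / (i + 1), 0, by omega, by omega, by
          rw [Nat.mod_eq_zero_of_dvd hdvd] at hdm; omega, by
          rw [Nat.mod_eq_zero_of_dvd hdvd] at hdm; omega⟩
      · have h0 : N % (i + 1) ≠ 0 := fun h0 => hdvd (Nat.dvd_of_mod_eq_zero h0)
        exact ⟨N % (i + 1) - 1, 0, 1, N / (i + 1), 0, by omega, by omega, by omega, by omega⟩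
    · -- Write `v = 3t + ρ` with `ρ ≤ 2` and `t = (i+1)q + r` with `r ≤ i`; take `l2 = q`, and
      -- `j = r - 1`, `l1 = 1` if `r ≠ 0`. The pair `(l0, s)` then depends only on `ρ` and `r = 0`.
      have ht := Nat.div_add_mod v 3
      have hρ := Nat.mod_lt v (show 3 > 0 by norm_num)
      have hdm := Nat.div_add_mod (v / 3) (i + 1)
      have hr : v / 3 % (i + 1) < i + 1 := Nat.mod_lt (v / 3) (Nat.succ_pos i)
      generalize v / 3 = t at *
      generalize v % 3 = ρ at *
      generalize t / (i + 1) = q at *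
      generalize t % (i + 1) = r at *
      have hρ' : ρ = 0 ∨ ρ = 1 ∨ ρ = 2 := by omega
      by_cases h0 : r = 0
      · rcases hρ' with h' | h' | h'
        · exact ⟨0, 0, 0, q, 0, by omega, by omega, by omega, by omega⟩
        · exact ⟨0, 0, 0, q, 1, by omega, by omega, by omega, by omega⟩
        · exact ⟨0, 1, 0, q, 0, by omega, by omega, by omega, by omega⟩
      · rcases hρ' with h' | h' | h'
        · exact ⟨r - 1, 0, 1, q, 1, by omega, by omega, by omega, by omega⟩
        · exact ⟨r - 1, 1, 1, q, 0, by omega, by omega, by omega, by omega⟩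
        · exact ⟨r - 1, 1, 1, q, 1, by omega, by omega, by omega, by omega⟩

lemma sum_block_card (N : ℕ) :
    2 * ∑ k ∈ Finset.range (N / 3 + 1), (3 * (N - 3 * k) - 1 + 1) = (N + 2) * (N + 1) := by
  induction N using Nat.strong_induction_on with
  | _ N ih =>
    by_cases h : N < 3
    · interval_cases N <;> simp
    · obtain ⟨M, rfl⟩ : ∃ M, N = M + 3 := ⟨N - 3, by omega⟩
      have hshift (k : ℕ) : M + 3 - 3 * (k + 1) = M - 3 * k := by omega
      have hM := ih M (by omega)
      have hfirst : 3 * (M + 3 - 3 * 0) - 1 + 1 = 3 * M + 9 := by omega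
      rw [show (M + 3) / 3 + 1 = (M / 3 + 1) + 1 by omega, Finset.sum_range_succ', hfirst]
      simp only [hshift]
      rw [mul_add, hM]
      ring

/-- Let `m ≥ 4` and `1 ≤ i ≤ m−2`. The set
`Ḡ = { (3m−1)k + 2ℓ₀ + (3j+2)ℓ₁ + (3i+3)ℓ₂ + s + 1 : j,k,ℓ₀,ℓ₁,ℓ₂,s ∈ ℕ, s ≤ 1, j ≤ i−1,
3k + ℓ₀ + (j+1)ℓ₁ + (i+1)ℓ₂ + s ≤ m−3 }` has exactly `(m−1)(m−2)/2` elements. -/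
theorem card_gap_set_small_order_nonrational (m i : ℕ) (hm : 4 ≤ m) (hi1 : 1 ≤ i)
    (hi2 : i ≤ m - 2) :
    {n : ℕ | ∃ j k l0 l1 l2 s : ℕ, s ≤ 1 ∧ j ≤ i - 1 ∧
        3 * k + l0 + (j + 1) * l1 + (i + 1) * l2 + s ≤ m - 3 ∧
        (3 * m - 1) * k + 2 * l0 + (3 * j + 2) * l1 + (3 * i + 3) * l2 + s + 1 = n}.ncard
      = (m - 1) * (m - 2) / 2 := by
  have hset : {n : ℕ | ∃ j k l0 l1 l2 s : ℕ, s ≤ 1 ∧ j ≤ i - 1 ∧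
        3 * k + l0 + (j + 1) * l1 + (i + 1) * l2 + s ≤ m - 3 ∧
        (3 * m - 1) * k + 2 * l0 + (3 * j + 2) * l1 + (3 * i + 3) * l2 + s + 1 = n} =
      ((Finset.range ((m - 3) / 3 + 1)).biUnion fun k =>
        (blockValues i (m - 3 - 3 * k)).image fun v => (3 * m - 1) * k + v + 1 : Finset ℕ) := by
    ext n
    simp only [Set.mem_ofPred_eq, Finset.coe_biUnion, Set.mem_iUnion, Finset.coe_image,
      Set.mem_image, Finset.mem_coe, Finset.mem_range, ← exists_rep_iff i _ _ hi1, exists_prop]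
    constructor
    · rintro ⟨j, k, l0, l1, l2, s, hs, hj, hw, rfl⟩
      exact ⟨k, by omega, _, ⟨j, l0, l1, l2, s, hs, hj, by omega, rfl⟩, by ring⟩
    · rintro ⟨k, hk, _, ⟨j, l0, l1, l2, s, hs, hj, hw, rfl⟩, rfl⟩
      exact ⟨j, k, l0, l1, l2, s, hs, hj, by omega, by ring⟩
  rw [hset, Set.ncard_coe_finset, Finset.card_biUnion]
  · have hcard (k : ℕ) : ((blockValues i (m - 3 - 3 * k)).image
        fun v => (3 * m - 1) * k + v + 1).card = 3 * (m - 3 - 3 * k) - 1 + 1 := by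
      rw [Finset.card_image_of_injective _ (fun a b h => by simpa using h), card_blockValues]
    simp only [hcard]
    have hsum := sum_block_card (m - 3)
    rw [show m - 3 + 2 = m - 1 by omega, show m - 3 + 1 = m - 2 by omega] at hsum
    omega
  · -- `k` is recovered from an element `n` of its block as `(n - 1) / (3m - 1)`.
    intro a _ b _ hab
    rw [Function.onFun_apply, Finset.disjoint_left]
    intro n hna hnb
    obtain ⟨v, hv, rfl⟩ := Finset.mem_image.mp hna
    obtain ⟨w, hw, hvw⟩ := Finset.mem_image.mp hnb
    have hdiv (k u : ℕ) (hu : u ∈ blockValues i (m - 3 - 3 * k)) :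
        ((3 * m - 1) * k + u) / (3 * m - 1) = k := by
      have := le_of_mem_blockValues hu
      rw [Nat.mul_add_div (by omega), Nat.div_eq_of_lt (by omega), add_zero]
    apply hab
    rw [← hdiv a v hv, ← hdiv b w hw, Nat.succ_injective hvw]
end

section
/- Let m ≥ 4 be an integer. Then the set G₂ = { 3mk + (3j+2) + s + 1 : j, k, s nonnegative integers with s ≤ 1 and 3k + (j+1) + s ≤ m−3 } has exactly 2m−7 + ⌊(m−4)/3⌋ + 2⌊(m−5)(m−6)/6⌋ elements, where the floors are taken in the integers. -/
/-!
The map `(s, k, j) ↦ 3mk + (3j+2) + s + 1` is injective on the admissible triples: `s ∈ {0, 1}` is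
read off modulo `3`, and then `mk + j` with `0 ≤ j < m` determines `k` and `j`. So the set has as
many elements as there are admissible triples. For fixed `s` these are the pairs `(k, j)` with
`3k + j < N`, where `N = m - 3 - s`, and there are `⌊(N+1)(N+2)/6⌋` of them (`sum_range_sub_three_mul`).
Adding the values for `s = 0` and `s = 1` gives the formula, by checking each residue of `m` mod `6`.
-/

/-- The number of pairs `(k, j)` with `3k + j < N`, summed over `k`; the truncated subtraction
makes the terms with `3k ≥ N` vanish. -/
lemma sum_range_sub_three_mul (N : ℕ) :
    ∑ k ∈ Finset.range N, (N - 3 * k) = (N + 1) * (N + 2) / 6 := by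
  induction N using Nat.strong_induction_on with
  | _ N ih =>
    rcases lt_or_ge N 3 with h | h
    · interval_cases N <;> decide
    · obtain ⟨n, rfl⟩ := Nat.exists_eq_add_of_le' h
      -- Removing the term `k = 0` and shifting `k` turns the sum for `n + 3` into that for `n`.
      rw [Finset.sum_range_succ', Finset.sum_range_succ, Finset.sum_range_succ]
      have e : ∀ k, n + 3 - 3 * (k + 1) = n - 3 * k := fun k => by omega
      simp only [e]
      rw [ih n (by omega)]
      have e2 : (n + 3 + 1) * (n + 3 + 2) = (n + 1) * (n + 2) + 6 * (n + 3) := by ring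
      rw [e2]
      omega

/-- The admissible triples `(s, k, j)`, with `n = m - 3`. -/
def admissibleTriples (n : ℕ) : Finset (Σ _ : ℕ, Σ _ : ℕ, ℕ) :=
  (Finset.range 2).sigma fun s =>
    (Finset.range (n - s)).sigma fun k => Finset.range (n - s - 3 * k)

lemma mem_admissibleTriples (n s k j : ℕ) :
    (⟨s, k, j⟩ : Σ _ : ℕ, Σ _ : ℕ, ℕ) ∈ admissibleTriples n ↔ s ≤ 1 ∧ 3 * k + j + 1 + s ≤ n := by
  simp only [admissibleTriples, Finset.mem_sigma, Finset.mem_range]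
  omega

lemma card_admissibleTriples (n : ℕ) :
    (admissibleTriples n).card = (n + 1) * (n + 2) / 6 + (n - 1 + 1) * (n - 1 + 2) / 6 := by
  simp only [admissibleTriples, Finset.card_sigma, Finset.card_range, sum_range_sub_three_mul]
  simp [Finset.sum_range_succ]

/-- Let `m ≥ 4`. The set `G₂ = { 3mk + (3j+2) + s + 1 : j,k,s ∈ ℕ, s ≤ 1,
3k + (j+1) + s ≤ m−3 }` has exactly `2m−7 + ⌊(m−4)/3⌋ + 2⌊(m−5)(m−6)/6⌋` elements,
where the floors are taken in the integers. -/
theorem card_G2 (m : ℤ) (hm : 4 ≤ m) :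
    (({n : ℤ | ∃ j k s : ℕ, (s : ℤ) ≤ 1 ∧
        3 * (k : ℤ) + ((j : ℤ) + 1) + (s : ℤ) ≤ m - 3 ∧
        3 * m * (k : ℤ) + (3 * (j : ℤ) + 2) + (s : ℤ) + 1 = n}).ncard : ℤ)
      = 2 * m - 7 + (m - 4) / 3 + 2 * ((m - 5) * (m - 6) / 6) := by
  obtain ⟨i, hi⟩ := Int.eq_ofNat_of_zero_le (sub_nonneg.mpr hm)
  obtain rfl : m = i + 4 := by omega
  let f : (Σ _ : ℕ, Σ _ : ℕ, ℕ) → ℤ := fun x =>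
    3 * ((i : ℤ) + 4) * (x.2.1 : ℤ) + (3 * (x.2.2 : ℤ) + 2) + (x.1 : ℤ) + 1
  have hset : {n : ℤ | ∃ j k s : ℕ, (s : ℤ) ≤ 1 ∧
        3 * (k : ℤ) + ((j : ℤ) + 1) + (s : ℤ) ≤ (i : ℤ) + 4 - 3 ∧
        3 * ((i : ℤ) + 4) * (k : ℤ) + (3 * (j : ℤ) + 2) + (s : ℤ) + 1 = n}
      = f '' (admissibleTriples (i + 1) : Set (Σ _ : ℕ, Σ _ : ℕ, ℕ)) := by
    ext n
    constructor
    · rintro ⟨j, k, s, hs, h, rfl⟩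
      exact ⟨⟨s, k, j⟩, (mem_admissibleTriples _ _ _ _).2 (by omega), rfl⟩
    · rintro ⟨⟨s, k, j⟩, h, rfl⟩
      have h' := (mem_admissibleTriples _ _ _ _).1 h
      exact ⟨j, k, s, by omega, by omega, rfl⟩
  have hinj : Set.InjOn f (admissibleTriples (i + 1) : Set (Σ _ : ℕ, Σ _ : ℕ, ℕ)) := by
    rintro ⟨s, k, j⟩ h ⟨s', k', j'⟩ h' e
    have h1 := (mem_admissibleTriples _ _ _ _).1 h
    have h2 := (mem_admissibleTriples _ _ _ _).1 h'
    simp only [f, mul_assoc] at e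
    obtain rfl : s = s' := by omega
    have e1 : ((i : ℤ) + 4) * k + j = ((i : ℤ) + 4) * k' + j' := by omega
    have hk : (k : ℤ) = k' := by
      rcases lt_trichotomy (k : ℤ) k' with hlt | heq | hlt
      · have : (j : ℤ) < i + 4 := by omega
        nlinarith
      · exact heq
      · have : (j' : ℤ) < i + 4 := by omega
        nlinarith
    obtain rfl : k = k' := by exact_mod_cast hk
    obtain rfl : j = j' := by omega
    rfl
  rw [hset, hinj.ncard_image, Set.ncard_coe_finset, card_admissibleTriples]
  -- Writing `i = 6u + r` makes every floor explicit up to the atom `u ^ 2`.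
  obtain ⟨u, r, hr, rfl⟩ : ∃ u r : ℕ, r < 6 ∧ i = 6 * u + r :=
    ⟨i / 6, i % 6, Nat.mod_lt _ (by norm_num), by omega⟩
  rw [Nat.add_sub_cancel]
  push_cast
  interval_cases r <;> push_cast <;> ring_nf <;> omega
end

section
/- Let m ≥ 4 be an integer, and define the sets G₂ = { 3mk + (3j+2) + s + 1 : j, k, s nonnegative integers with s ≤ 1 and 3k + (j+1) + s ≤ m−3 } and G₃ = { 3mk + 2 + (3j+2) + s + 1 : j, k, s nonnegative integers with s ≤ 1 and 3k + (j+1) + s ≤ m−4 }. Then the intersection G₂ ∩ G₃ has exactly m−5 + ⌊(m−6)(m−7)/6⌋ elements, where the floor is taken in the integers. -/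
/-!
Elements of `G₂` have offset `3j + 3 + s` in their block of length `3m`, hence residue `0` or `1`
modulo `3`, while those of `G₃` have offset `3j + 5 + s`, hence residue `2` or `0`. A common element
therefore comes from `s = 0` in `G₂` and `s = 1` in `G₃`; all offsets being less than `3m`, both
representations use the same `k`. So `G₂ ∩ G₃` consists of the numbers `3mk + 3j + 6` with
`3k + j ≤ m - 6` (`inter_eq_image`), each with unique `(k, j)` (`block_unique`). Summing the
`m - 5 - 3k` choices of `j` over `k` gives the count (`sum_trunc`).
-/

/-- Uniqueness of quotient and remainder. -/
lemma block_unique {m k a k' b : ℤ} (ha : 0 ≤ a) (ham : a < m) (hb : 0 ≤ b) (hbm : b < m)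
    (h : m * k + a = m * k' + b) : k = k' ∧ a = b := by
  have hk : k = k' := by
    rcases lt_trichotomy k k' with h1 | h1 | h1
    · nlinarith
    · exact h1
    · nlinarith
  subst hk
  exact ⟨rfl, by linarith⟩

/-- The number of pairs `(k, j)` of naturals with `3k + j < N`. The summand is truncated at `0`, so
any upper summation limit `M ≥ N` gives the same value; this freedom makes the induction
`N → N + 3` go through. -/
lemma sum_trunc (N M : ℕ) (h : N ≤ M) :
    ((∑ k ∈ Finset.range M, (N - 3 * k) : ℕ) : ℤ) = N + ((N : ℤ) - 1) * ((N : ℤ) - 2) / 6 := by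
  induction N using Nat.strong_induction_on generalizing M with
  | _ N ih =>
    rcases Nat.lt_or_ge N 3 with h3 | h3
    · rcases M with _ | M
      · obtain rfl : N = 0 := by omega
        norm_num
      · rw [Finset.sum_range_succ', Finset.sum_eq_zero (fun k _ => by omega)]
        interval_cases N <;> norm_num
    · obtain ⟨N, rfl⟩ := Nat.exists_eq_add_of_le' h3
      obtain ⟨M, rfl⟩ : ∃ M', M = M' + 1 := ⟨M - 1, by omega⟩
      rw [Finset.sum_range_succ',
        Finset.sum_congr rfl (fun k _ => (by omega : N + 3 - 3 * (k + 1) = N - 3 * k))]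
      have key := ih N (by omega) M (by omega)
      push_cast at key ⊢
      rw [key, show ((N : ℤ) + 3 - 1) * ((N : ℤ) + 3 - 2)
        = ((N : ℤ) - 1) * ((N : ℤ) - 2) + N * 6 by ring,
        Int.add_mul_ediv_right _ _ (by norm_num)]
      ring

/-- The pairs `(k, j)` with `3k + j < m - 5` parametrise `G₂ ∩ G₃`. For `m = 4` the truncation
`(m - 5).toNat = 0` correctly yields the empty set. -/
lemma inter_eq_image (m : ℤ) :
    ({n : ℤ | ∃ j k s : ℕ, (s : ℤ) ≤ 1 ∧
          3 * (k : ℤ) + ((j : ℤ) + 1) + (s : ℤ) ≤ m - 3 ∧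
          3 * m * (k : ℤ) + (3 * (j : ℤ) + 2) + (s : ℤ) + 1 = n} ∩
        {n : ℤ | ∃ j k s : ℕ, (s : ℤ) ≤ 1 ∧
          3 * (k : ℤ) + ((j : ℤ) + 1) + (s : ℤ) ≤ m - 4 ∧
          3 * m * (k : ℤ) + 2 + (3 * (j : ℤ) + 2) + (s : ℤ) + 1 = n})
      = Set.image (fun p : (_ : ℕ) × ℕ => 3 * m * (p.1 : ℤ) + 3 * (p.2 : ℤ) + 6)
        ((Finset.range (m - 5).toNat).sigma
          (fun k => Finset.range ((m - 5).toNat - 3 * k)) : Finset ((_ : ℕ) × ℕ)) := by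
  ext n
  simp only [Set.mem_inter_iff, Set.mem_ofPred_eq, Set.mem_image, Finset.mem_coe,
    Finset.mem_sigma, Finset.mem_range, Sigma.exists]
  constructor
  · rintro ⟨⟨j, k, s, hs, hle, rfl⟩, j', k', s', hs', hle', h⟩
    obtain ⟨hk, h'⟩ := block_unique (m := 3 * m) (k := k') (k' := k)
      (a := 2 + (3 * (j' : ℤ) + 2) + s' + 1) (b := (3 * (j : ℤ) + 2) + s + 1)
      (by omega) (by omega) (by omega) (by omega) (by linarith)
    refine ⟨k', j', ⟨by omega, by omega⟩, ?_⟩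
    obtain rfl : s' = 1 := by omega
    push_cast at h
    linarith
  · rintro ⟨k, j, ⟨h1, h2⟩, rfl⟩
    refine ⟨⟨j + 1, k, 0, by norm_num, ?_, ?_⟩, j, k, 1, by norm_num, ?_, ?_⟩
    · push_cast; omega
    · push_cast; ring
    · push_cast; omega
    · push_cast; ring

/-- Let `m ≥ 4`, and let
`G₂ = { 3mk + (3j+2) + s + 1 : j,k,s ∈ ℕ, s ≤ 1, 3k + (j+1) + s ≤ m−3 }` and
`G₃ = { 3mk + 2 + (3j+2) + s + 1 : j,k,s ∈ ℕ, s ≤ 1, 3k + (j+1) + s ≤ m−4 }`.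
Then `|G₂ ∩ G₃| = m−5 + ⌊(m−6)(m−7)/6⌋`, the floor being taken in the integers. -/
theorem card_G2_inter_G3 (m : ℤ) (hm : 4 ≤ m) :
    (({n : ℤ | ∃ j k s : ℕ, (s : ℤ) ≤ 1 ∧
          3 * (k : ℤ) + ((j : ℤ) + 1) + (s : ℤ) ≤ m - 3 ∧
          3 * m * (k : ℤ) + (3 * (j : ℤ) + 2) + (s : ℤ) + 1 = n} ∩
        {n : ℤ | ∃ j k s : ℕ, (s : ℤ) ≤ 1 ∧
          3 * (k : ℤ) + ((j : ℤ) + 1) + (s : ℤ) ≤ m - 4 ∧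
          3 * m * (k : ℤ) + 2 + (3 * (j : ℤ) + 2) + (s : ℤ) + 1 = n}).ncard : ℤ)
      = m - 5 + (m - 6) * (m - 7) / 6 := by
  rw [inter_eq_image, Set.InjOn.ncard_image, Set.ncard_coe_finset, Finset.card_sigma]
  · simp only [Finset.card_range]
    rw [sum_trunc _ _ le_rfl]
    rcases hm.eq_or_lt with rfl | h5
    · norm_num
    · rw [Int.toNat_of_nonneg (by omega)]
      ring_nf
  · rintro ⟨k, j⟩ hp ⟨k', j'⟩ hp' h
    simp only [Finset.mem_coe, Finset.mem_sigma, Finset.mem_range] at hp hp' h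
    obtain ⟨hk, hj⟩ := block_unique (m := m) (k := k) (a := j) (k' := k') (b := j')
      (by omega) (by omega) (by omega) (by omega) (by linarith)
    obtain rfl : k = k' := by exact_mod_cast hk
    obtain rfl : j = j' := by exact_mod_cast hj
    rfl
end

section
/- Let m ≥ 4 and i be integers with 1 ≤ i ≤ m−2. Suppose k, ℓ₀, ℓ₁, s, j and k̃, ℓ̃₀, ℓ̃₁, ℓ₂, s̃, j̃ are nonnegative integers with ℓ₀, ℓ₁, s, ℓ̃₀, ℓ̃₁, s̃ all at most 1, j ≤ i−1, j̃ ≤ i−1, ℓ₂ ≥ 1, and satisfying 3k + ℓ₀ + (j+1)ℓ₁ + s ≤ m−3 and 3k̃ + ℓ̃₀ + (j̃+1)ℓ̃₁ + (i+1)ℓ₂ + s̃ ≤ m−3. Then 3mk + 2ℓ₀ + (3j+2)ℓ₁ + s ≠ 3mk̃ + 2ℓ̃₀ + (3j̃+2)ℓ̃₁ + (3i+3)ℓ₂ + s̃. -/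
/-!
Both values have the form `3 * m * q + r`, and the degree bounds force `r < 3 * m` on each side.
Equality of the values therefore gives equality of the remainders modulo `3 * m`. This is impossible:
the `a`-type remainder is at most `3 * i + 2` since `j ≤ i - 1`, while the `b`-type remainder is at
least `(3 * i + 3) * l2 ≥ 3 * i + 3`.
-/

/-- Disjointness of the `a`-type and `b`-type gap values in the small `P`-order case:
with the stated constraints (all variables nonnegative integers),
`3mk + 2ℓ₀ + (3j+2)ℓ₁ + s ≠ 3mk̃ + 2ℓ̃₀ + (3j̃+2)ℓ̃₁ + (3i+3)ℓ₂ + s̃`. -/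
theorem a_type_ne_b_type (m i : ℕ) (hm : 4 ≤ m) (hi1 : 1 ≤ i) (hi2 : i ≤ m - 2)
    (k l0 l1 s j kt lt0 lt1 l2 st jt : ℕ)
    (hl0 : l0 ≤ 1) (hl1 : l1 ≤ 1) (hs : s ≤ 1)
    (hlt0 : lt0 ≤ 1) (hlt1 : lt1 ≤ 1) (hst : st ≤ 1)
    (hj : j ≤ i - 1) (hjt : jt ≤ i - 1) (hl2 : 1 ≤ l2)
    (h1 : 3 * k + l0 + (j + 1) * l1 + s ≤ m - 3)
    (h2 : 3 * kt + lt0 + (jt + 1) * lt1 + (i + 1) * l2 + st ≤ m - 3) :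
    3 * m * k + 2 * l0 + (3 * j + 2) * l1 + s ≠
      3 * m * kt + 2 * lt0 + (3 * jt + 2) * lt1 + (3 * i + 3) * l2 + st := by
  intro h
  -- Three times the degree bounds control the residual parts, which are therefore below `3 * m`.
  have hA : 2 * l0 + (3 * j + 2) * l1 + s < 3 * m := by
    have : (3 * j + 2) * l1 ≤ 3 * ((j + 1) * l1) := by nlinarith
    omega
  have hB : 2 * lt0 + (3 * jt + 2) * lt1 + (3 * i + 3) * l2 + st < 3 * m := by
    have : (3 * jt + 2) * lt1 ≤ 3 * ((jt + 1) * lt1) := by nlinarith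
    have : (3 * i + 3) * l2 = 3 * ((i + 1) * l2) := by ring
    omega
  have hAB : 2 * l0 + (3 * j + 2) * l1 + s =
      2 * lt0 + (3 * jt + 2) * lt1 + (3 * i + 3) * l2 + st := by
    have := congrArg (· % (3 * m)) h
    simpa only [add_assoc, Nat.mul_add_mod, Nat.mod_eq_of_lt hA, Nat.mod_eq_of_lt hB,
      Nat.mod_eq_of_lt (add_assoc (2 * l0) _ _ ▸ hA),
      Nat.mod_eq_of_lt (show 2 * lt0 + ((3 * jt + 2) * lt1 + ((3 * i + 3) * l2 + st)) < 3 * m by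
        omega)] using this
  -- The left side is at most `2 + (3 * i - 1) + 1 = 3 * i + 2`, the right side at least `3 * i + 3`.
  have hA' : (3 * j + 2) * l1 ≤ 3 * j + 2 := by
    simpa using Nat.mul_le_mul_left (3 * j + 2) hl1
  have hB' : 3 * i + 3 ≤ (3 * i + 3) * l2 := Nat.le_mul_of_pos_right _ hl2
  omega
end

section
/- Let K be a field of prime characteristic p with p ≠ 3, and let ζ ∈ K satisfy ζ² + ζ + 1 = 0. Let i ≥ 1 be an integer. Then: (a) in K[X], the polynomial (X+ζ)^{3i} − (X+ζ²)^{3i} is divisible by 3(ζ−ζ²)·X·(X−1), and the quotient polynomial P_i is nonzero of degree at most 3i−3; (b) the polynomial (1−ζ)(X+ζ)^{3i−1} + (1−ζ²)(X+ζ²)^{3i−1} is divisible by 3(X−1), and the quotient polynomial Q_i is nonzero of degree exactly 3i−2. -/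
/-!
Both divisibilities are root checks. Since `1 + ζ = -ζ²`, `1 + ζ² = -ζ` and `ζ³ = 1`, the polynomial
in (a) vanishes at `0` and `1`, and the one in (b) vanishes at `1`. The constants `3` and `ζ - ζ²`
are units because `(ζ - ζ²)² = -3 ≠ 0` in characteristic `≠ 3`.

In (a) the difference of two monic polynomials of degree `3i` has degree at most `3i - 1`, and it is
nonzero because at `-ζ` its value is `-(ζ² - ζ)^{3i}`. In (b) the coefficient of `X^{3i-1}` is
`(1 - ζ) + (1 - ζ²) = 3 ≠ 0`, so the degree is exactly `3i - 1`. Dividing out the linear factors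
gives the degrees of the quotients.
-/

open Polynomial

/-- Let `K` be a field of prime characteristic `p ≠ 3` and let `ζ ∈ K` satisfy
`ζ² + ζ + 1 = 0`, and let `i ≥ 1`. Then (a) `(X+ζ)^{3i} − (X+ζ²)^{3i}` is divisible by
`3(ζ−ζ²)·X·(X−1)` with nonzero quotient `P` of degree at most `3i−3`, and
(b) `(1−ζ)(X+ζ)^{3i−1} + (1−ζ²)(X+ζ²)^{3i−1}` is divisible by `3(X−1)` with nonzero
quotient `Q` of degree exactly `3i−2`. -/
theorem P_Q_exist (p : ℕ) [Fact p.Prime] (hp : p ≠ 3)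
    (K : Type*) [Field K] [CharP K p]
    (ζ : K) (hζ : ζ ^ 2 + ζ + 1 = 0) (i : ℕ) (hi : 1 ≤ i) :
    (∃ P : K[X],
      (X + C ζ) ^ (3 * i) - (X + C (ζ ^ 2)) ^ (3 * i)
        = C (3 * (ζ - ζ ^ 2)) * X * (X - 1) * P ∧
      P ≠ 0 ∧ P.natDegree ≤ 3 * i - 3) ∧
    (∃ Q : K[X],
      C (1 - ζ) * (X + C ζ) ^ (3 * i - 1) + C (1 - ζ ^ 2) * (X + C (ζ ^ 2)) ^ (3 * i - 1)
        = C 3 * (X - 1) * Q ∧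
      Q ≠ 0 ∧ Q.natDegree = 3 * i - 2) := by
  have h3 : (3 : K) ≠ 0 := by
    intro h
    have h' : ((3 : ℕ) : K) = 0 := by exact_mod_cast h
    rw [CharP.cast_eq_zero_iff K p] at h'
    exact hp ((Nat.prime_dvd_prime_iff_eq Fact.out Nat.prime_three).1 h')
  have hcube : ζ ^ 3 = 1 := by linear_combination (ζ - 1) * hζ
  have hdiff : ζ - ζ ^ 2 ≠ 0 := by
    intro h
    apply h3
    linear_combination (ζ ^ 2 - ζ) * h + (ζ ^ 2 - 3 * ζ + 3) * hζ
  have e1 : 1 + ζ = -ζ ^ 2 := by linear_combination hζ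
  have e2 : 1 + ζ ^ 2 = -ζ := by linear_combination hζ
  have hX1 : (X - 1 : K[X]) = X - C 1 := by simp
  have hX1d : (X - 1 : K[X]).natDegree = 1 := by rw [hX1, natDegree_X_sub_C]
  have hX1n : (X - 1 : K[X]) ≠ 0 := by rw [hX1]; exact X_sub_C_ne_zero 1
  obtain ⟨j, rfl⟩ : ∃ j, i = j + 1 := ⟨i - 1, by omega⟩
  constructor
  · set F : K[X] := (X + C ζ) ^ (3 * (j + 1)) - (X + C (ζ ^ 2)) ^ (3 * (j + 1)) with hF
    have hc : 3 * (ζ - ζ ^ 2) ≠ 0 := mul_ne_zero h3 hdiff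
    have hF0 : F ≠ 0 := by
      intro h
      have h' : F.eval (-ζ) = 0 := by rw [h, eval_zero]
      simp only [hF, eval_sub, eval_pow, eval_add, eval_X, eval_C, neg_add_cancel] at h'
      rw [zero_pow (by omega), zero_sub, neg_eq_zero] at h'
      have := eq_zero_of_pow_eq_zero h'
      exact hdiff (by linear_combination -this)
    have d0 : X ∣ F := by
      rw [X_dvd_iff, coeff_zero_eq_eval_zero]
      simp only [hF, eval_sub, eval_pow, eval_add, eval_X, eval_C, zero_add]
      rw [pow_mul, pow_mul, show (ζ ^ 2) ^ 3 = (ζ ^ 3) ^ 2 by ring, hcube]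
      simp
    have d1 : X - 1 ∣ F := by
      rw [hX1, dvd_iff_isRoot, IsRoot]
      simp only [hF, eval_sub, eval_pow, eval_add, eval_X, eval_C]
      rw [e1, e2, pow_mul, pow_mul, sub_eq_zero]
      congr 1
      linear_combination (-ζ ^ 3) * hcube
    have hcop : IsCoprime (X : K[X]) (X - 1) := ⟨1, -1, by ring⟩
    obtain ⟨R, hR⟩ := hcop.mul_dvd d0 d1
    have hR' : F = C (3 * (ζ - ζ ^ 2)) * X * (X - 1) * (C (3 * (ζ - ζ ^ 2))⁻¹ * R) := by
      have : C (3 * (ζ - ζ ^ 2)) * C (3 * (ζ - ζ ^ 2))⁻¹ = (1 : K[X]) := by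
        rw [← C_mul, mul_inv_cancel₀ hc, C_1]
      linear_combination hR - X * (X - 1) * R * this
    have hR0 : R ≠ 0 := by
      rintro rfl
      exact hF0 (by rw [hR, mul_zero])
    refine ⟨_, hR', mul_ne_zero (C_ne_zero.2 (inv_ne_zero hc)) hR0, ?_⟩
    rw [natDegree_C_mul (inv_ne_zero hc)]
    have hdF : F.natDegree < 3 * (j + 1) := by
      have m1 := (monic_X_add_C ζ).pow (3 * (j + 1))
      have m2 := (monic_X_add_C (ζ ^ 2)).pow (3 * (j + 1))
      have hd1 : ((X + C ζ) ^ (3 * (j + 1))).natDegree = 3 * (j + 1) := by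
        rw [natDegree_pow, natDegree_X_add_C, mul_one]
      have hd2 : ((X + C (ζ ^ 2)) ^ (3 * (j + 1))).natDegree = 3 * (j + 1) := by
        rw [natDegree_pow, natDegree_X_add_C, mul_one]
      have hlt := degree_sub_lt_left
        (by rw [degree_eq_natDegree m1.ne_zero, degree_eq_natDegree m2.ne_zero, hd1, hd2])
        m1.ne_zero (m1.leadingCoeff.trans m2.leadingCoeff.symm)
      rw [degree_eq_natDegree m1.ne_zero, hd1, ← hF] at hlt
      exact (natDegree_lt_iff_degree_lt hF0).2 hlt
    rw [hR, natDegree_mul (mul_ne_zero X_ne_zero hX1n) hR0, natDegree_mul X_ne_zero hX1n,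
      natDegree_X, hX1d] at hdF
    omega
  · rw [show 3 * (j + 1) - 1 = 3 * j + 2 by omega, show 3 * (j + 1) - 2 = 3 * j + 1 by omega]
    set F : K[X] := C (1 - ζ) * (X + C ζ) ^ (3 * j + 2)
      + C (1 - ζ ^ 2) * (X + C (ζ ^ 2)) ^ (3 * j + 2) with hF
    have hdF : F.natDegree = 3 * j + 2 := by
      apply natDegree_eq_of_le_of_coeff_ne_zero
      · rw [hF]
        compute_degree
      · have hcoeff (a : K) : ((X + C a) ^ (3 * j + 2)).coeff (3 * j + 2) = 1 := by
          simp [coeff_X_add_C_pow]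
        rw [hF, coeff_add, coeff_C_mul, coeff_C_mul, hcoeff, hcoeff]
        intro h
        exact h3 (by linear_combination h + hζ)
    have d1 : X - 1 ∣ F := by
      rw [hX1, dvd_iff_isRoot, IsRoot]
      simp only [hF, eval_add, eval_mul, eval_pow, eval_X, eval_C]
      have hpow : (-ζ ^ 2) ^ (3 * j) = (-ζ) ^ (3 * j) := by
        rw [pow_mul, pow_mul]
        congr 1
        linear_combination (-ζ ^ 3) * hcube
      rw [e1, e2, pow_add, pow_add, hpow]
      linear_combination (-ζ) ^ (3 * j) * (ζ ^ 2 - ζ ^ 3) * hζ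
    obtain ⟨R, hR⟩ := d1
    have hR' : F = C 3 * (X - 1) * (C 3⁻¹ * R) := by
      have : C 3 * C 3⁻¹ = (1 : K[X]) := by rw [← C_mul, mul_inv_cancel₀ h3, C_1]
      linear_combination hR - (X - 1) * R * this
    have hR0 : R ≠ 0 := by
      rintro rfl
      rw [hR, mul_zero, natDegree_zero] at hdF
      omega
    refine ⟨_, hR', mul_ne_zero (C_ne_zero.2 (inv_ne_zero h3)) hR0, ?_⟩
    rw [natDegree_C_mul (inv_ne_zero h3)]
    rw [hR, natDegree_mul hX1n hR0, hX1d] at hdF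
    omega
end

section
/- Let K be an algebraically closed field of prime characteristic p with p ≠ 3, let ζ ∈ K satisfy ζ² + ζ + 1 = 0, and let i ≥ 1 be an integer. Let P, Q ∈ K[X] be the polynomials determined by the identities (X+ζ)^{3i} − (X+ζ²)^{3i} = 3(ζ−ζ²)·X·(X−1)·P and (1−ζ)(X+ζ)^{3i−1} + (1−ζ²)(X+ζ²)^{3i−1} = 3(X−1)·Q. Then P and Q have no common root in K, i.e., there is no x ∈ K with P(x) = 0 and Q(x) = 0. -/
open Polynomial

/-!
Put `a = x + ζ` and `b = x + ζ²`, so `a ≠ b`. At a common root `x` the two identities give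
`a ^ (3i) = b ^ (3i)` and `a ^ (3i-1) = ζ² b ^ (3i-1)`, using `1 - ζ² = -ζ² (1 - ζ)`. As `a` and `b`
cannot both vanish, neither does, so `ζ² a = b`, which forces `x = 1`.

At `x = 1` the factor `X - 1` hides the values of `P` and `Q`, so they are read off from the
derivatives of the identities. There `a³ = b³ = -1`, and `P(1) = 0` forces `i = 0` in `K`, whereas
`Q(1)` is then, up to sign, `3i - 1 = -1`; hence `Q(1) ≠ 0`.
-/

/-- Let `K` be an algebraically closed field of prime characteristic `p ≠ 3`, let
`ζ ∈ K` satisfy `ζ² + ζ + 1 = 0`, let `i ≥ 1`, and let `P, Q ∈ K[X]` be determined by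
`(X+ζ)^{3i} − (X+ζ²)^{3i} = 3(ζ−ζ²)·X·(X−1)·P` and
`(1−ζ)(X+ζ)^{3i−1} + (1−ζ²)(X+ζ²)^{3i−1} = 3(X−1)·Q`.
Then `P` and `Q` have no common root in `K`. -/
theorem P_Q_no_common_root (p : ℕ) [Fact p.Prime] (hp : p ≠ 3)
    (K : Type*) [Field K] [IsAlgClosed K] [CharP K p]
    (ζ : K) (hζ : ζ ^ 2 + ζ + 1 = 0) (i : ℕ) (hi : 1 ≤ i)
    (P Q : K[X])
    (hP : (X + C ζ) ^ (3 * i) - (X + C (ζ ^ 2)) ^ (3 * i)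
        = C (3 * (ζ - ζ ^ 2)) * X * (X - 1) * P)
    (hQ : C (1 - ζ) * (X + C ζ) ^ (3 * i - 1) + C (1 - ζ ^ 2) * (X + C (ζ ^ 2)) ^ (3 * i - 1)
        = C 3 * (X - 1) * Q) :
    ¬ ∃ x : K, P.eval x = 0 ∧ Q.eval x = 0 := by
  have h3 : (3 : K) ≠ 0 := by
    intro h
    have h' : ((3 : ℕ) : K) = 0 := by exact_mod_cast h
    rw [CharP.cast_eq_zero_iff K p] at h'
    exact hp ((Nat.prime_dvd_prime_iff_eq Fact.out Nat.prime_three).1 h')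
  have hζ1 : 1 - ζ ≠ 0 := by
    intro h
    apply h3
    linear_combination hζ + (ζ + 2) * h
  have hζ0 : ζ ≠ 0 := by
    rintro rfl
    simp at hζ
  rintro ⟨x, hPx, hQx⟩
  obtain ⟨j, rfl⟩ : ∃ j, i = j + 1 := ⟨i - 1, by omega⟩
  have e1 : 3 * (j + 1) = 3 * j + 3 := by ring
  have e2 : 3 * (j + 1) - 1 = 3 * j + 2 := by omega
  rw [e1] at hP
  rw [e2] at hQ
  have hx1 : x = 1 := by
    have h1 := congrArg (eval x) hP
    have h2 := congrArg (eval x) hQ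
    simp only [eval_sub, eval_add, eval_mul, eval_pow, eval_X, eval_C, eval_one, hPx, hQx,
      mul_zero] at h1 h2
    have h4 : (x + ζ) ^ (3 * j + 2) = ζ ^ 2 * (x + ζ ^ 2) ^ (3 * j + 2) := by
      apply mul_left_cancel₀ hζ1
      linear_combination h2 - (1 - ζ) * (x + ζ ^ 2) ^ (3 * j + 2) * hζ
    have hb : x + ζ ^ 2 ≠ 0 := by
      intro hb
      have ha : x + ζ = 0 := by
        rw [hb, zero_pow (by omega), mul_zero] at h4
        exact eq_zero_of_pow_eq_zero h4
      exact mul_ne_zero hζ0 hζ1 (by linear_combination ha - hb)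
    have h5 : ζ ^ 2 * (x + ζ) = x + ζ ^ 2 := by
      apply mul_right_cancel₀ (pow_ne_zero (3 * j + 2) hb)
      linear_combination h1 - (x + ζ) * h4
    have h6 : (1 - ζ) * ζ ^ 2 * (x - 1) = 0 := by
      linear_combination h5 + x * (1 - ζ) * hζ
    have h7 := (mul_eq_zero.1 h6).resolve_left (mul_ne_zero hζ1 (pow_ne_zero 2 hζ0))
    exact sub_eq_zero.1 h7
  subst hx1
  -- The derivatives at `1` of the two identities express `P(1)` and `Q(1)`.
  have d1 := congrArg (fun f => eval 1 (derivative f)) hP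
  have d2 := congrArg (fun f => eval 1 (derivative f)) hQ
  simp [derivative_pow, hPx, hQx] at d1 d2
  have ha : (1 + ζ) ^ 3 = -1 := by linear_combination (ζ + 2) * hζ
  have hb : (1 + ζ ^ 2) ^ 3 = -1 := by
    rw [show 1 + ζ ^ 2 = -ζ by linear_combination hζ]
    linear_combination (1 - ζ) * hζ
  rw [pow_add, pow_add, pow_mul, pow_mul, ha, hb] at d1 d2
  have hu : ((-1 : K)) ^ j ≠ 0 := pow_ne_zero j (by simp)
  have hj : (j : K) + 1 = 0 := by
    have h : 3 * (-1 : K) ^ j * (ζ * (1 - ζ)) * ((j : K) + 1) = 0 := by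
      linear_combination d1 + 3 * ((j : K) + 1) * (-1) ^ j * (ζ ^ 2 - ζ) * hζ
    exact (mul_eq_zero.1 h).resolve_left (mul_ne_zero (mul_ne_zero h3 hu) (mul_ne_zero hζ0 hζ1))
  have h : 3 * (-1 : K) ^ j = 0 := by
    linear_combination
      -d2 + 9 * (-1) ^ j * hj - (3 * (j : K) + 2) * (-1) ^ j * (ζ ^ 2 - ζ + 1) * hζ
  exact mul_ne_zero h3 hu h
end
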